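/- Let m, n : ℕ with 2 ≤ m < n, and let y ∈ ℂ⟦T⟧ with ord y = n, such that y is reduced with respect to m (there exists i with coeff_i(y) ≠ 0 and ¬ (m ∣ i)). Set x := T^m, i := (Dx)·(D²y) − (D²x)·(Dy) and v := ((Dx)² + (Dy)²)·((Dx)·(D³y) − (D³x)·(Dy)) + 3·((Dx)·(D²x) + (Dy)·(D²y))·((D²x)·(Dy) − (Dx)·(D²y)). Then the supremum λ over all (B,C) ∈ ℂ² of ord(T^(2m) + y² + 2·B·T^m + 2·C·y) is finite, and ord v + 3 = ord i + λ (an equality in ℕ∞). -/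

import Mathlib

open PowerSeries

/-- The formal derivative on `ℂ⟦T⟧`. -/
noncomputable def D : PowerSeries ℂ → PowerSeries ℂ := fun f => PowerSeries.derivative ℂ f

/-- The inflection series of the parametrised curve `(x, y)`: `x'y'' − x''y'`. -/
noncomputable def iser (x y : PowerSeries ℂ) : PowerSeries ℂ :=
  D x * D (D y) - D (D x) * D y

/-- The vertex series of the parametrised curve `(x, y)`:
`v = (x'² + y'²)(x'y''' − x'''y') + 3(x'x'' + y'y'')(x''y' − x'y'')`. -/
noncomputable def vser (x y : PowerSeries ℂ) : PowerSeries ℂ :=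
  ((D x) ^ 2 + (D y) ^ 2) * (D x * D (D (D y)) - D (D (D x)) * D y) +
    3 * (D x * D (D x) + D y * D (D y)) * (D (D x) * D y - D x * D (D y))

/-!
Both series are Wronskians of first derivatives: `i = W(x', y')` and `-2v = W(x', y', z')`, where
`z = x² + y² + 2Bx + 2Cy` is the equation of any circle through the origin along the curve. Series
of pairwise distinct orders `d₁, …, dᵣ` have a Wronskian of order `d₁ + ⋯ + dᵣ - r(r - 1)/2`, since
its leading coefficient is a nonzero multiple of the Vandermonde determinant of the `dᵢ`. Choosing
`B` and `C` so that the coefficients of `z` at the exponents `ord x` and `ord y` vanish makes the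
orders of `x`, `y` and `z` pairwise distinct; adding multiples of `x` and `y` to this `z` cannot
raise its order, so `ord z = λ`, and subtracting the two Wronskian formulas gives the result.
Thus `λ` is finite unless the curve lies on a circle, which reducedness of `y` excludes.
-/

section Order

variable {R : Type*} [CommSemiring R] [NoZeroDivisors R]

lemma order_C_mul_of_ne_zero {b : R} (hb : b ≠ 0) (f : R⟦X⟧) : (C b * f).order = f.order := by
  have hC : (C b).order = 0 :=
    not_not.1 (mt order_ne_zero_iff_constCoeff_eq_zero.1 (by rwa [constantCoeff_C]))
  rw [order_mul, hC, zero_add]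

lemma order_add_C_mul_add_C_mul_le {x y z : R⟦X⟧} (hxy : x.order ≠ y.order)
    (hxz : x.order ≠ z.order) (hyz : y.order ≠ z.order) (b c : R) :
    (z + C b * x + C c * y).order ≤ z.order := by
  have order_add_C_mul_le {f g : R⟦X⟧} (h : f.order ≠ g.order) (c : R) :
      (f + C c * g).order ≤ f.order := by
    obtain rfl | hc := eq_or_ne c 0
    · simp
    rw [order_add_of_order_ne _ _ (by rwa [order_C_mul_of_ne_zero hc])]
    exact inf_le_left
  have hy : (z + C b * x).order ≠ y.order := by
    obtain rfl | hb := eq_or_ne b 0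
    · simpa using hyz.symm
    rw [order_add_of_order_ne _ _ (by rwa [order_C_mul_of_ne_zero hb, ne_comm]),
      order_C_mul_of_ne_zero hb]
    exact min_rec' (· ≠ y.order) hyz.symm hxy
  exact (order_add_C_mul_le hy c).trans (order_add_C_mul_le hxz.symm b)

lemma order_derivative_add_one [CharZero R] {f : R⟦X⟧} (hf : f.order ≠ 0) :
    (d⁄dX R f).order + 1 = f.order := by
  obtain rfl | hf0 := eq_or_ne f 0
  · simp
  obtain ⟨k, hk⟩ : ∃ k : ℕ, f.order = (k + 1 : ℕ) := by
    have htop : f.order ≠ ⊤ := mt order_eq_top.1 hf0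
    lift f.order to ℕ using htop with d
    exact ⟨d - 1, by rw [Nat.sub_add_cancel (by simpa [Nat.one_le_iff_ne_zero] using hf)]⟩
  obtain ⟨hcoeff, hlow⟩ := order_eq_nat.1 hk
  have hD : (d⁄dX R f).order = k := by
    refine order_eq_nat.2 ⟨?_, fun i hi => ?_⟩
    · rw [coeff_derivative]
      exact mul_ne_zero hcoeff (Nat.cast_add_one_ne_zero k)
    · rw [coeff_derivative, hlow _ (by lia), zero_mul]
  rw [hD, hk, Nat.cast_succ]

lemma order_derivative_ne [CharZero R] {f g : R⟦X⟧} (hf : f.order ≠ 0) (hg : g.order ≠ 0)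
    (hfg : f.order ≠ g.order) : (d⁄dX R f).order ≠ (d⁄dX R g).order := fun h =>
  hfg (by rw [← order_derivative_add_one hf, ← order_derivative_add_one hg, h])

end Order

lemma exists_coeff_add_C_mul_add_C_mul_eq_zero {K : Type*} [Field K] {x y : K⟦X⟧} {m n : ℕ}
    (hx : x.order = m) (hy : y.order = n) (hmn : m ≠ n) (z : K⟦X⟧) :
    ∃ b c : K, coeff m (z + C b * x + C c * y) = 0 ∧ coeff n (z + C b * x + C c * y) = 0 := by
  wlog hlt : m < n generalizing x y m n
  · obtain ⟨c, b, hn, hm⟩ := this hy hx hmn.symm (by lia)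
    exact ⟨b, c, by rwa [add_right_comm], by rwa [add_right_comm]⟩
  have hxm : coeff m x ≠ 0 := (order_eq_nat.1 hx).1
  obtain ⟨hyn, hylow⟩ := order_eq_nat.1 hy
  let b := -coeff m z / coeff m x
  refine ⟨b, -coeff n (z + C b * x) / coeff n y, ?_, ?_⟩
  · simp [hylow m hlt, b, div_mul_cancel₀ _ hxm]
  · simp [div_mul_cancel₀ _ hyn]

section IterateDerivative

variable {R : Type*} [CommSemiring R]

lemma coeff_X_pow_mul_iterate_derivative (f : R⟦X⟧) (j k : ℕ) :
    coeff k (X ^ j * (d⁄dX R)^[j] f) = k.descFactorial j * coeff k f := by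
  rw [coeff_X_pow_mul']
  split_ifs with hjk
  · obtain ⟨i, rfl⟩ := Nat.exists_eq_add_of_le' hjk
    rw [Nat.add_sub_cancel, coeff_iterate_derivative, Nat.add_descFactorial_eq_ascFactorial]
  · simp [Nat.descFactorial_of_lt (not_le.1 hjk)]

lemma exists_X_pow_mul_iterate_derivative_eq {f : R⟦X⟧} {d : ℕ} (hf : X ^ d ∣ f) (j : ℕ) :
    ∃ g : R⟦X⟧, X ^ j * (d⁄dX R)^[j] f = X ^ d * g ∧
      constantCoeff g = d.descFactorial j * coeff d f := by
  have hdvd : X ^ d ∣ X ^ j * (d⁄dX R)^[j] f := by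
    refine X_pow_dvd_iff.2 fun k hk => ?_
    rw [coeff_X_pow_mul_iterate_derivative, X_pow_dvd_iff.1 hf k hk, mul_zero]
  obtain ⟨g, hg⟩ := hdvd
  refine ⟨g, hg, ?_⟩
  rw [← coeff_X_pow_mul_iterate_derivative, hg, ← coeff_zero_eq_constantCoeff_apply]
  simpa using (coeff_X_pow_mul g d 0).symm

end IterateDerivative

section Wronskian

variable {R : Type*} [CommRing R]

/-- The Wronskian determinant of a finite family of formal power series; row `i` lists the
successive derivatives of `f i`. -/
noncomputable def wronskian {n : ℕ} (f : Fin n → R⟦X⟧) : R⟦X⟧ :=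
  (Matrix.of fun i j : Fin n => (d⁄dX R)^[j] (f i)).det

lemma wronskian_fin_two (f g : R⟦X⟧) :
    wronskian ![f, g] = f * d⁄dX R g - d⁄dX R f * g := by
  simp [wronskian, Matrix.det_fin_two]

lemma wronskian_fin_three (f g h : R⟦X⟧) :
    wronskian ![f, g, h] =
      f * d⁄dX R g * d⁄dX R (d⁄dX R h) - f * d⁄dX R (d⁄dX R g) * d⁄dX R h -
      d⁄dX R f * g * d⁄dX R (d⁄dX R h) + d⁄dX R f * d⁄dX R (d⁄dX R g) * h +
      d⁄dX R (d⁄dX R f) * g * d⁄dX R h - d⁄dX R (d⁄dX R f) * d⁄dX R g * h := by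
  simp [wronskian, Matrix.det_fin_three]

lemma det_descFactorial_ne_zero [IsDomain R] [CharZero R] {n : ℕ} {d : Fin n → ℕ}
    (hd : Function.Injective d) :
    (Matrix.of fun i j : Fin n => ((d i).descFactorial j : R)).det ≠ 0 := by
  have hvandermonde := Matrix.det_eval_matrixOfPolynomials_eq_det_vandermonde
    (fun i => (d i : R)) (fun j : Fin n => descPochhammer R j)
    (fun j => descPochhammer_natDegree R j) (fun j => monic_descPochhammer R j)
  simp only [descPochhammer_eval_eq_descFactorial] at hvandermonde
  rw [← hvandermonde]
  exact Matrix.det_vandermonde_ne_zero_iff.2 (Nat.cast_injective.comp hd)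

lemma order_wronskian_add_choose_two_of_order_eq [IsDomain R] [CharZero R] {n : ℕ}
    {f : Fin n → R⟦X⟧} {d : Fin n → ℕ} (hf : ∀ i, (f i).order = d i)
    (hd : Function.Injective d) :
    (wronskian f).order + n.choose 2 = (∑ i, d i : ℕ) := by
  have hdvd (i) : X ^ d i ∣ f i := X_pow_dvd_iff.2 (order_eq_nat.1 (hf i)).2
  choose g hg hg0 using fun i (j : Fin n) => exists_X_pow_mul_iterate_derivative_eq (hdvd i) j
  have hfactor : X ^ n.choose 2 * wronskian f = X ^ (∑ i, d i) * (Matrix.of g).det := by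
    have hexp : ∑ j : Fin n, (j : ℕ) = n.choose 2 := by
      rw [Fin.sum_univ_eq_sum_range (fun j => j), Finset.sum_range_id, Nat.choose_two_right]
    rw [← hexp, ← Finset.prod_pow_eq_pow_sum, ← Finset.prod_pow_eq_pow_sum, wronskian,
      ← Matrix.det_mul_row, ← Matrix.det_mul_column]
    simp only [Matrix.of_apply, hg]
  have hlead : constantCoeff (Matrix.of g).det ≠ 0 := by
    have hmap : constantCoeff.mapMatrix (Matrix.of g) =
        Matrix.of fun i (j : Fin n) => coeff (d i) (f i) * ((d i).descFactorial j : R) := by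
      ext i j
      simp [hg0, mul_comm]
    have hdet := Matrix.det_mul_column (fun i => coeff (d i) (f i))
      (Matrix.of fun i j : Fin n => ((d i).descFactorial j : R))
    simp only [Matrix.of_apply] at hdet
    rw [RingHom.map_det, hmap, hdet]
    exact mul_ne_zero (Finset.prod_ne_zero_iff.2 fun i _ => (order_eq_nat.1 (hf i)).1)
      (det_descFactorial_ne_zero hd)
  have hdet0 : (Matrix.of g).det.order = 0 :=
    not_not.1 (mt order_ne_zero_iff_constCoeff_eq_zero.1 hlead)
  have horder := congrArg order hfactor
  rwa [order_mul, order_mul, order_X_pow, order_X_pow, hdet0, add_zero, add_comm] at horder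

theorem order_wronskian_add_choose_two [IsDomain R] [CharZero R] {n : ℕ} {f : Fin n → R⟦X⟧}
    (hf : Function.Injective fun i => (f i).order) :
    (wronskian f).order + n.choose 2 = ∑ i, (f i).order := by
  by_cases hzero : ∃ i, f i = 0
  · obtain ⟨i, hi⟩ := hzero
    have hwronskian : wronskian f = 0 :=
      Matrix.det_eq_zero_of_row_eq_zero i fun j => by simp [hi]
    have hsum : ∑ i, (f i).order = ⊤ :=
      WithTop.sum_eq_top.2 ⟨i, Finset.mem_univ i, order_eq_top.2 hi⟩
    rw [hwronskian, order_zero, top_add, hsum]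
  · push Not at hzero
    have hd (i) : (f i).order = (f i).order.toNat := (coe_toNat_order (hzero i)).symm
    have hinj : Function.Injective fun i => (f i).order.toNat := fun i j hij =>
      hf ((hd i).trans ((congrArg Nat.cast hij).trans (hd j).symm))
    rw [order_wronskian_add_choose_two_of_order_eq hd hinj, Nat.cast_sum]
    exact Finset.sum_congr rfl fun i _ => (hd i).symm

end Wronskian

section CircleSeries

/-- The equation `X² + Y² + 2BX + 2CY = 0` of a circle through the origin, with `(B, C) = p`,
pulled back along the parametrised curve `(x, y)`. Its order is the order of contact of the curve
with that circle. -/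
noncomputable def circleSeries {R : Type*} [CommRing R] (x y : R⟦X⟧) (p : R × R) : R⟦X⟧ :=
  x ^ 2 + y ^ 2 + 2 * C p.1 * x + 2 * C p.2 * y

lemma circleSeries_eq_add_C_mul_add_C_mul {R : Type*} [CommRing R] (x y : R⟦X⟧) (p q : R × R) :
    circleSeries x y q =
      circleSeries x y p + C (2 * (q.1 - p.1)) * x + C (2 * (q.2 - p.2)) * y := by
  simp only [circleSeries, map_mul, map_sub, map_ofNat]
  ring

lemma order_circleSeries_ne_zero {R : Type*} [CommRing R] {x y : R⟦X⟧} (hx : x.order ≠ 0)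
    (hy : y.order ≠ 0) (p : R × R) : (circleSeries x y p).order ≠ 0 := by
  rw [order_ne_zero_iff_constCoeff_eq_zero] at hx hy ⊢
  simp [circleSeries, hx, hy]

lemma iSup_order_circleSeries {R : Type*} [CommRing R] [NoZeroDivisors R] {x y : R⟦X⟧}
    {p : R × R} (hxy : x.order ≠ y.order) (hxp : x.order ≠ (circleSeries x y p).order)
    (hyp : y.order ≠ (circleSeries x y p).order) :
    (⨆ q, (circleSeries x y q).order) = (circleSeries x y p).order := by
  refine le_antisymm (iSup_le fun q => ?_) (le_iSup (fun q => (circleSeries x y q).order) p)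
  rw [circleSeries_eq_add_C_mul_add_C_mul x y p q]
  exact order_add_C_mul_add_C_mul_le hxy hxp hyp _ _

lemma exists_order_circleSeries_ne {K : Type*} [Field K] [NeZero (2 : K)] {x y : K⟦X⟧} {m n : ℕ}
    (hx : x.order = m) (hy : y.order = n) (hmn : m ≠ n) :
    ∃ p, x.order ≠ (circleSeries x y p).order ∧ y.order ≠ (circleSeries x y p).order := by
  obtain ⟨b, c, hbm, hcn⟩ :=
    exists_coeff_add_C_mul_add_C_mul_eq_zero hx hy hmn (circleSeries x y 0)
  have hp : circleSeries x y (b / 2, c / 2) = circleSeries x y 0 + C b * x + C c * y := by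
    rw [circleSeries_eq_add_C_mul_add_C_mul x y 0]
    simp only [Prod.fst_zero, Prod.snd_zero, sub_zero, mul_div_cancel₀ _ (two_ne_zero (α := K))]
  refine ⟨(b / 2, c / 2), fun h => ?_, fun h => ?_⟩ <;> rw [hp] at h
  · exact (order_eq_nat.1 (h.symm.trans hx)).1 hbm
  · exact (order_eq_nat.1 (h.symm.trans hy)).1 hcn

lemma coeff_sq_eq_zero_of_not_dvd {R : Type*} [CommSemiring R] {y : R⟦X⟧} {m i : ℕ}
    (hy : constantCoeff y = 0) (hi : ¬ m ∣ i) (hlow : ∀ j < i, ¬ m ∣ j → coeff j y = 0) :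
    coeff i (y ^ 2) = 0 := by
  rw [pow_two, coeff_mul]
  refine Finset.sum_eq_zero fun ⟨a, b⟩ hab => ?_
  obtain rfl : a + b = i := Finset.HasAntidiagonal.mem_antidiagonal.1 hab
  obtain rfl | ha := Nat.eq_zero_or_pos a
  · simp [hy]
  obtain rfl | hb := Nat.eq_zero_or_pos b
  · simp [hy]
  by_cases hma : m ∣ a
  · rw [hlow b (by lia) (mt (dvd_add hma) hi), mul_zero]
  · rw [hlow a (by lia) hma, zero_mul]

lemma circleSeries_X_pow_ne_zero {R : Type*} [CommRing R] [IsDomain R] [NeZero (2 : R)]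
    {m n : ℕ} {y : R⟦X⟧} (hm : m ≠ 0) (hmn : m < n) (hy : y.order = n)
    (hred : ∃ i, coeff i y ≠ 0 ∧ ¬ m ∣ i) (p : R × R) : circleSeries (X ^ m) y p ≠ 0 := by
  classical
  intro hzero
  have hcoeff (k) : coeff k (circleSeries (X ^ m) y p) = 0 := by rw [hzero, map_zero]
  have hexpand : circleSeries (X ^ m) y p =
      X ^ (2 * m) + y ^ 2 + C (2 * p.1) * X ^ m + C (2 * p.2) * y := by
    simp only [circleSeries, map_mul, map_ofNat, pow_mul']
  simp only [hexpand, map_add, coeff_C_mul, coeff_X_pow] at hcoeff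
  obtain ⟨i, ⟨hi, hmi⟩, hmin⟩ := Nat.findX hred
  have hlow (j) (hj : j < i) (hmj : ¬ m ∣ j) : coeff j y = 0 :=
    not_not.1 fun h => hmin j hj ⟨h, hmj⟩
  -- At the least exponent `i` of `y` not divisible by `m`, only the term `2Cy` contributes.
  have hp : p.2 = 0 := by
    have hy0 : constantCoeff y = 0 :=
      order_ne_zero_iff_constCoeff_eq_zero.1 (by rw [hy]; exact_mod_cast (by lia : n ≠ 0))
    have hsq := coeff_sq_eq_zero_of_not_dvd hy0 hmi hlow
    have hne : i ≠ m := fun h => hmi (h ▸ dvd_rfl)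
    have hne2 : i ≠ 2 * m := fun h => hmi (h ▸ dvd_mul_left m 2)
    simpa [hsq, hne, hne2, hi, two_ne_zero] using hcoeff i
  have hsq : coeff (2 * m) (y ^ 2) = 0 := by
    refine coeff_of_lt_order _ ?_
    rw [order_pow, hy, nsmul_eq_mul]
    exact_mod_cast (by lia : 2 * m < 2 * n)
  simpa [hp, hsq, hm] using hcoeff (2 * m)

end CircleSeries

lemma iser_eq_wronskian (x y : ℂ⟦X⟧) : iser x y = wronskian ![D x, D y] :=
  (wronskian_fin_two (D x) (D y)).symm

lemma wronskian_circleSeries (x y : ℂ⟦X⟧) (p : ℂ × ℂ) :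
    wronskian ![D x, D y, D (circleSeries x y p)] = C (-2) * vser x y := by
  have hD2 : d⁄dX ℂ (2 : ℂ⟦X⟧) = 0 := (d⁄dX ℂ).map_natCast 2
  have hC2 : (C (-2) : ℂ⟦X⟧) = -2 := by rw [map_neg, map_ofNat]
  simp only [wronskian_fin_three, vser, circleSeries, D, pow_two, map_add, Derivation.leibniz,
    smul_eq_mul, derivative_C, hD2, hC2, mul_zero, add_zero]
  ring

lemma order_vser_add_three {x y : ℂ⟦X⟧} {p : ℂ × ℂ} (hx : x.order ≠ 0) (hy : y.order ≠ 0)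
    (hxy : x.order ≠ y.order) (hxp : x.order ≠ (circleSeries x y p).order)
    (hyp : y.order ≠ (circleSeries x y p).order) :
    (vser x y).order + 3 = (iser x y).order + (circleSeries x y p).order := by
  set z := circleSeries x y p with hz
  have hz0 : z.order ≠ 0 := order_circleSeries_ne_zero hx hy p
  have hDxy : (D x).order ≠ (D y).order := order_derivative_ne hx hy hxy
  have hDxz : (D x).order ≠ (D z).order := order_derivative_ne hx hz0 hxp
  have hDyz : (D y).order ≠ (D z).order := order_derivative_ne hy hz0 hyp
  have hi : (iser x y).order + 1 = (D x).order + (D y).order := by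
    have h := order_wronskian_add_choose_two (f := ![D x, D y]) (by
      intro i j; fin_cases i <;> fin_cases j <;> simp [hDxy, hDxy.symm])
    simpa [← iser_eq_wronskian] using h
  have hv : (vser x y).order + 3 = (D x).order + (D y).order + (D z).order := by
    have h := order_wronskian_add_choose_two (f := ![D x, D y, D z]) (by
      intro i j
      fin_cases i <;> fin_cases j <;>
        simp [hDxy, hDxy.symm, hDxz, hDxz.symm, hDyz, hDyz.symm])
    rw [hz, wronskian_circleSeries, order_C_mul_of_ne_zero (by norm_num), ← hz] at h
    simpa [Fin.sum_univ_three] using h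
  calc (vser x y).order + 3 = (iser x y).order + ((D z).order + 1) := by
        rw [hv, ← hi, add_assoc, add_comm 1]
    _ = (iser x y).order + z.order := by rw [D, order_derivative_add_one hz0]

theorem vertex_eq_inflection_add_contact_general {x y : ℂ⟦X⟧} {m n : ℕ} (hx : x.order = m)
    (hy : y.order = n) (hm : m ≠ 0) (hn : n ≠ 0) (hmn : m ≠ n) :
    ((⨆ p, (circleSeries x y p).order) ≠ ⊤ ↔ ∀ p, circleSeries x y p ≠ 0) ∧
    (vser x y).order + 3 = (iser x y).order + ⨆ p, (circleSeries x y p).order := by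
  have hx0 : x.order ≠ 0 := by rw [hx]; exact_mod_cast hm
  have hy0 : y.order ≠ 0 := by rw [hy]; exact_mod_cast hn
  have hxy : x.order ≠ y.order := by rw [hx, hy]; exact_mod_cast hmn
  obtain ⟨p, hxp, hyp⟩ := exists_order_circleSeries_ne hx hy hmn
  have hsup := iSup_order_circleSeries hxy hxp hyp
  refine ⟨⟨fun hfin q hq => hfin ?_, fun hcirc => ?_⟩, ?_⟩
  · exact top_unique (order_eq_top.2 hq ▸ le_iSup (fun q => (circleSeries x y q).order) q)
  · rw [hsup]
    exact mt order_eq_top.1 (hcirc p)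
  · rw [hsup]
    exact order_vser_add_three hx0 hy0 hxy hxp hyp

/-- **Theorem 2.6(4).** For a singular parametrised curve germ `γ(t) = (t^m, y(t))`
(with `2 ≤ m < n = ord y` and `y` reduced with respect to `m`), the maximal order of
contact `λ(γ)` of `γ` with complex circles through the origin is finite, and
`V_γ = I_γ + λ(γ) − 3`. -/
theorem vertex_eq_inflection_add_contact (m n : ℕ) (hm : 2 ≤ m) (hmn : m < n)
    (y : PowerSeries ℂ) (hy : y.order = n)
    (hred : ∃ i, (PowerSeries.coeff i) y ≠ 0 ∧ ¬ m ∣ i) :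
    (⨆ p : ℂ × ℂ, ((X : PowerSeries ℂ) ^ (2 * m) + y ^ 2 +
        2 * C p.1 * (X : PowerSeries ℂ) ^ m + 2 * C p.2 * y).order) ≠ ⊤ ∧
    (vser ((X : PowerSeries ℂ) ^ m) y).order + 3
      = (iser ((X : PowerSeries ℂ) ^ m) y).order +
        ⨆ p : ℂ × ℂ, ((X : PowerSeries ℂ) ^ (2 * m) + y ^ 2 +
          2 * C p.1 * (X : PowerSeries ℂ) ^ m + 2 * C p.2 * y).order := by
  have h := vertex_eq_inflection_add_contact_general (order_X_pow m) hy (by lia) (by lia) hmn.ne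
  simpa only [circleSeries, ← pow_mul'] using
    h.imp_left fun hiff => hiff.2 (circleSeries_X_pow_ne_zero (by lia) hmn hy hred)
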